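/- Let σ : Ω → H be holomorphic and k-nondegenerate, k ≥ 1, and define the curvature coefficient of the k-jet bundle of the line bundle K(z) := ∂/∂z̄ ( G_k⁻¹ · ∂G_k/∂z )(z), a (k+1)×(k+1) matrix with entries indexed by 0,…,k. Then for every z ∈ Ω: K(z)_{i,j} = 0 whenever 0 ≤ j ≤ k−1 (all columns except the last vanish), and the bottom-right entry satisfies K(z)_{k,k} = ∂²(log det G_k)/∂z∂z̄ (z) = det G_{k−1}(z)·det G_{k+1}(z)/(det G_k(z))². -/

import Mathlib

open Matrix

noncomputable section

/-- Wirtinger derivative `∂g/∂z := (1/2)(∂g/∂x − i·∂g/∂y)`. -/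
def Dz {E : Type*} [NormedAddCommGroup E] [NormedSpace ℂ E] (g : ℂ → E) (z : ℂ) : E :=
  (1 / 2 : ℂ) • (fderiv ℝ g z 1 - Complex.I • fderiv ℝ g z Complex.I)

/-- Wirtinger derivative `∂g/∂z̄ := (1/2)(∂g/∂x + i·∂g/∂y)`. -/
def Dzbar {E : Type*} [NormedAddCommGroup E] [NormedSpace ℂ E] (g : ℂ → E) (z : ℂ) : E :=
  (1 / 2 : ℂ) • (fderiv ℝ g z 1 + Complex.I • fderiv ℝ g z Complex.I)

/-- Entrywise Wirtinger derivative `∂/∂z` of a matrix-valued function. -/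
def mDz {ι : Type*} (M : ℂ → Matrix ι ι ℂ) (z : ℂ) : Matrix ι ι ℂ :=
  Matrix.of fun i j => Dz (fun w => M w i j) z

/-- Entrywise Wirtinger derivative `∂/∂z̄` of a matrix-valued function. -/
def mDzbar {ι : Type*} (M : ℂ → Matrix ι ι ℂ) (z : ℂ) : Matrix ι ι ℂ :=
  Matrix.of fun i j => Dzbar (fun w => M w i j) z

variable {H : Type*} [NormedAddCommGroup H] [InnerProductSpace ℂ H] [CompleteSpace H]

/-- `⟪x, y⟫` is the Mathlib inner product (conjugate-linear in the first argument);
it equals the paper's inner product `⟨y, x⟩`, which is linear in the first argument. -/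
local notation "⟪" x ", " y "⟫" => (inner ℂ x y : ℂ)

/-- `lG σ N z` is the `N×N` Gram matrix of `σ(z), σ′(z), …, σ^{(N−1)}(z)`; its `(i,j)` entry is
`⟪σ^{(i)}(z), σ^{(j)}(z)⟫ = ⟨σ^{(j)}(z), σ^{(i)}(z)⟩_paper`.  The jet Gram matrix `G_k` of the
paper is `lG σ (k+1)`. -/
def lG (σ : ℂ → H) (N : ℕ) (z : ℂ) : Matrix (Fin N) (Fin N) ℂ :=
  Matrix.of fun i j => ⟪iteratedDeriv (i : ℕ) σ z, iteratedDeriv (j : ℕ) σ z⟫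

set_option linter.unusedSectionVars false

section Wirtinger

variable {z : ℂ}

theorem Filter.EventuallyEq.Dzbar_eq {f g : ℂ → ℂ} (h : f =ᶠ[nhds z] g) :
    Dzbar f z = Dzbar g z := by
  simp only [Dzbar, h.fderiv_eq]

theorem Dzbar_const (c : ℂ) : Dzbar (fun _ => c) z = 0 := by
  simp [Dzbar]

theorem Dzbar_sum_mul {ι : Type*} [Fintype ι] {a b : ι → ℂ → ℂ}
    (ha : ∀ j, DifferentiableAt ℝ (a j) z) (hb : ∀ j, DifferentiableAt ℝ (b j) z) :
    Dzbar (fun w => ∑ j, a j w * b j w) z =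
      ∑ j, (Dzbar (a j) z * b j z + a j z * Dzbar (b j) z) := by
  have h : HasFDerivAt (fun w => ∑ j, a j w * b j w)
      (∑ j, (a j z • fderiv ℝ (b j) z + b j z • fderiv ℝ (a j) z)) z :=
    HasFDerivAt.fun_sum fun j _ => (ha j).hasFDerivAt.mul (hb j).hasFDerivAt
  simp only [Dzbar, h.fderiv, _root_.sum_apply, _root_.add_apply, _root_.smul_apply, smul_eq_mul,
    Finset.mul_sum, ← Finset.sum_add_distrib]
  exact Finset.sum_congr rfl fun j _ => by ring

theorem Dz_log {f : ℂ → ℂ} (hf : DifferentiableAt ℝ f z) (hz : f z ∈ Complex.slitPlane) :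
    Dz (fun w => Complex.log (f w)) z = Dz f z / f z := by
  have h : HasFDerivAt (fun w => Complex.log (f w)) ((f z)⁻¹ • fderiv ℝ f z) z := by
    refine (((Complex.hasStrictDerivAt_log hz).hasDerivAt.hasFDerivAt.restrictScalars ℝ).comp z
      hf.hasFDerivAt).congr_fderiv ?_
    ext v
    simp [mul_comm]
  simp only [Dz, h.fderiv, _root_.smul_apply, smul_eq_mul]
  ring

theorem fderiv_inner_of_hasDerivAt {f g : ℂ → H} {f' g' : H} (hf : HasDerivAt f f' z)
    (hg : HasDerivAt g g' z) (v : ℂ) :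
    DifferentiableAt ℝ (fun w => ⟪f w, g w⟫) z ∧
    fderiv ℝ (fun w => ⟪f w, g w⟫) z v =
      v * ⟪f z, g'⟫ + (starRingEnd ℂ) v * ⟪f', g z⟫ := by
  have h := (hf.hasFDerivAt.restrictScalars ℝ).inner ℂ (hg.hasFDerivAt.restrictScalars ℝ)
  refine ⟨h.differentiableAt, ?_⟩
  rw [h.fderiv]
  simp [inner_smul_left, inner_smul_right]

theorem Dz_inner {f g : ℂ → H} {f' g' : H} (hf : HasDerivAt f f' z) (hg : HasDerivAt g g' z) :
    Dz (fun w => ⟪f w, g w⟫) z = ⟪f z, g'⟫ := by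
  simp only [Dz, (fderiv_inner_of_hasDerivAt hf hg _).2, smul_eq_mul, map_one, Complex.conj_I]
  linear_combination (-(1 / 2) * ⟪f z, g'⟫ + (1 / 2) * ⟪f', g z⟫) * Complex.I_mul_I

theorem Dzbar_inner {f g : ℂ → H} {f' g' : H} (hf : HasDerivAt f f' z) (hg : HasDerivAt g g' z) :
    Dzbar (fun w => ⟪f w, g w⟫) z = ⟪f', g z⟫ := by
  simp only [Dzbar, (fderiv_inner_of_hasDerivAt hf hg _).2, smul_eq_mul, map_one, Complex.conj_I]
  linear_combination ((1 / 2) * ⟪f z, g'⟫ - (1 / 2) * ⟪f', g z⟫) * Complex.I_mul_I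

end Wirtinger

section Determinant

variable {ι : Type*} [Fintype ι] [DecidableEq ι] {M : ℂ → Matrix ι ι ℂ} {z : ℂ}

/-- **Jacobi's formula** along real directions. -/
theorem hasFDerivAt_det {M' : ι → ι → ℂ →L[ℝ] ℂ}
    (hM : ∀ i j, HasFDerivAt (fun w => M w i j) (M' i j) z) :
    ∃ L : ℂ →L[ℝ] ℂ, HasFDerivAt (fun w => (M w).det) L z ∧
      ∀ v, L v = ∑ j, (M z).cramer (fun i => M' i j v) j := by
  let D : ContinuousMultilinearMap ℝ (fun _ : ι => ι → ℂ) ℂ :=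
    ⟨(detRowAlternating (R := ℂ) (n := ι)).toMultilinearMap.restrictScalars ℝ,
      Continuous.matrix_det (n := ι) (R := ℂ) continuous_id⟩
  have h := HasFDerivAt.multilinear_comp D (x := z) (g := fun j w i => M w i j)
    (g' := fun j => ContinuousLinearMap.pi fun i => M' i j)
    fun j => hasFDerivAt_pi.2 fun i => hM i j
  refine ⟨_, h.congr_of_eventuallyEq (Filter.Eventually.of_forall fun w => ?_), fun v => ?_⟩
  · exact (det_transpose (M w)).symm
  · rw [_root_.sum_apply]
    refine Finset.sum_congr rfl fun j _ => ?_
    rw [cramer_apply, ← det_transpose, ← updateRow_transpose]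
    rfl

theorem differentiableAt_det (hM : ∀ i j, DifferentiableAt ℝ (fun w => M w i j) z) :
    DifferentiableAt ℝ (fun w => (M w).det) z :=
  let ⟨_, hL, _⟩ := hasFDerivAt_det fun i j => (hM i j).hasFDerivAt
  hL.differentiableAt

theorem Dz_det (hM : ∀ i j, DifferentiableAt ℝ (fun w => M w i j) z) :
    Dz (fun w => (M w).det) z = ∑ j, (M z).cramer (fun i => mDz M z i j) j := by
  obtain ⟨L, hL, hLv⟩ := hasFDerivAt_det fun i j => (hM i j).hasFDerivAt
  have hcol : ∀ j, (fun i => mDz M z i j) = (1 / 2 : ℂ) •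
      ((fun i => fderiv ℝ (fun w => M w i j) z 1) -
        Complex.I • fun i => fderiv ℝ (fun w => M w i j) z Complex.I) := fun _ => rfl
  simp only [hcol, map_smul, map_sub, Pi.smul_apply, Pi.sub_apply, ← Finset.smul_sum,
    Finset.sum_sub_distrib]
  rw [Dz, hL.fderiv, hLv, hLv]

theorem differentiableAt_cramer {b : ι → ℂ → ℂ}
    (hM : ∀ i j, DifferentiableAt ℝ (fun w => M w i j) z)
    (hb : ∀ i, DifferentiableAt ℝ (b i) z) (i : ι) :
    DifferentiableAt ℝ (fun w => (M w).cramer (fun l => b l w) i) z := by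
  simp only [cramer_apply]
  refine differentiableAt_det fun l j => ?_
  rcases eq_or_ne j i with rfl | h
  · simpa using hb l
  · simpa [updateCol_ne h] using hM l j

theorem inv_mulVec_eq_cramer_div {A : Matrix ι ι ℂ} (b : ι → ℂ) (i : ι) :
    (A⁻¹ *ᵥ b) i = A.cramer b i / A.det := by
  rw [inv_def, cramer_eq_adjugate_mulVec, smul_mulVec, Ring.inverse_eq_inv', Pi.smul_apply,
    smul_eq_mul, div_eq_inv_mul]

/-- Cramer's rule for the last unknown when the right-hand side is supported on the last row. -/
theorem last_mul_det_of_mulVec_eq_single {n : ℕ} {A : Matrix (Fin (n + 1)) (Fin (n + 1)) ℂ}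
    {x : Fin (n + 1) → ℂ} {s : ℂ} (h : A *ᵥ x = Pi.single (Fin.last n) s) :
    x (Fin.last n) * A.det = s * (A.submatrix Fin.castSucc Fin.castSucc).det := by
  have h' := congrArg (fun y => (A.adjugate *ᵥ y) (Fin.last n)) h
  simp only [mulVec_mulVec, adjugate_mul, smul_mulVec, one_mulVec, Pi.smul_apply, smul_eq_mul,
    mulVec_single] at h'
  simpa [mul_comm, adjugate_fin_succ_eq_det_submatrix, ← two_mul] using h'

end Determinant

section JetGram

variable {Ω : Set ℂ} {σ : ℂ → H} {z : ℂ}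

theorem hasDerivAt_iteratedDeriv_of_differentiableOn (hΩ : IsOpen Ω)
    (hσ : DifferentiableOn ℂ σ Ω) (hz : z ∈ Ω) (n : ℕ) :
    HasDerivAt (iteratedDeriv n σ) (iteratedDeriv (n + 1) σ z) z := by
  have h := ((hσ.analyticOnNhd hΩ).iterated_deriv n z hz).differentiableAt.hasDerivAt
  rwa [← iteratedDeriv_eq_iterate, ← iteratedDeriv_succ] at h

theorem lG_submatrix_castSucc (n : ℕ) :
    (lG σ (n + 1) z).submatrix Fin.castSucc Fin.castSucc = lG σ n z := rfl

theorem det_lG_mem_slitPlane {n : ℕ}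
    (h : LinearIndependent ℂ fun i : Fin n => iteratedDeriv (i : ℕ) σ z) :
    (lG σ n z).det ∈ Complex.slitPlane := by
  open scoped ComplexOrder in
  exact Or.inl (Complex.pos_iff.1 (posDef_gram_of_linearIndependent h).det_pos).1

theorem differentiableAt_lG (hΩ : IsOpen Ω) (hσ : DifferentiableOn ℂ σ Ω) (hz : z ∈ Ω) {n : ℕ}
    (i j : Fin n) : DifferentiableAt ℝ (fun w => lG σ n w i j) z :=
  (fderiv_inner_of_hasDerivAt (hasDerivAt_iteratedDeriv_of_differentiableOn hΩ hσ hz i)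
    (hasDerivAt_iteratedDeriv_of_differentiableOn hΩ hσ hz j) 0).1

theorem mDz_lG (hΩ : IsOpen Ω) (hσ : DifferentiableOn ℂ σ Ω) (hz : z ∈ Ω) {n : ℕ}
    (i j : Fin n) :
    mDz (lG σ n) z i j = ⟪iteratedDeriv i σ z, iteratedDeriv (j + 1) σ z⟫ :=
  Dz_inner (hasDerivAt_iteratedDeriv_of_differentiableOn hΩ hσ hz i)
    (hasDerivAt_iteratedDeriv_of_differentiableOn hΩ hσ hz j)

/-- The coefficients, in the frame `σ, …, σ^{(n-1)}`, of the orthogonal projection of `σ^{(n)}`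
onto the span of the frame. -/
def jetCoeff (σ : ℂ → H) (n : ℕ) (z : ℂ) : Fin n → ℂ :=
  (lG σ n z)⁻¹ *ᵥ fun i => ⟪iteratedDeriv i σ z, iteratedDeriv n σ z⟫

theorem lG_mulVec_jetCoeff {n : ℕ} (hdet : (lG σ n z).det ≠ 0) :
    lG σ n z *ᵥ jetCoeff σ n z = fun i : Fin n => ⟪iteratedDeriv i σ z, iteratedDeriv n σ z⟫ := by
  rw [jetCoeff, mulVec_mulVec, mul_nonsing_inv _ hdet.isUnit, one_mulVec]

theorem differentiableAt_jetCoeff (hΩ : IsOpen Ω) (hσ : DifferentiableOn ℂ σ Ω) (hz : z ∈ Ω)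
    {n : ℕ} (hdet : (lG σ n z).det ≠ 0) (i : Fin n) :
    DifferentiableAt ℝ (fun w => jetCoeff σ n w i) z := by
  simp only [jetCoeff, inv_mulVec_eq_cramer_div, div_eq_mul_inv]
  refine (differentiableAt_cramer (differentiableAt_lG hΩ hσ hz) (fun l => ?_) i).mul
    ((differentiableAt_det (differentiableAt_lG hΩ hσ hz)).inv hdet)
  exact (fderiv_inner_of_hasDerivAt (hasDerivAt_iteratedDeriv_of_differentiableOn hΩ hσ hz l)
    (hasDerivAt_iteratedDeriv_of_differentiableOn hΩ hσ hz n) 0).1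

theorem inv_mul_mDz_lG_of_lt (hΩ : IsOpen Ω) (hσ : DifferentiableOn ℂ σ Ω) (hz : z ∈ Ω) {n : ℕ}
    (hdet : (lG σ n z).det ≠ 0) (i j : Fin n) (hj : (j : ℕ) + 1 < n) :
    ((lG σ n z)⁻¹ * mDz (lG σ n) z) i j = (1 : Matrix (Fin n) (Fin n) ℂ) i ⟨j + 1, hj⟩ := by
  rw [← nonsing_inv_mul _ hdet.isUnit, mul_apply, mul_apply]
  exact Finset.sum_congr rfl fun l _ => by rw [mDz_lG hΩ hσ hz]; rfl

theorem inv_mul_mDz_lG_last (hΩ : IsOpen Ω) (hσ : DifferentiableOn ℂ σ Ω) (hz : z ∈ Ω) {n : ℕ}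
    (i : Fin (n + 1)) :
    ((lG σ (n + 1) z)⁻¹ * mDz (lG σ (n + 1)) z) i (Fin.last n) = jetCoeff σ (n + 1) z i := by
  rw [mul_apply]
  exact Finset.sum_congr rfl fun l _ => by rw [mDz_lG hΩ hσ hz]; rfl

theorem Dz_det_lG (hΩ : IsOpen Ω) (hσ : DifferentiableOn ℂ σ Ω) (hz : z ∈ Ω) {n : ℕ} :
    Dz (fun w => (lG σ (n + 1) w).det) z =
      (lG σ (n + 1) z).cramer
        (fun i => ⟪iteratedDeriv i σ z, iteratedDeriv (n + 1) σ z⟫) (Fin.last n) := by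
  rw [Dz_det (differentiableAt_lG hΩ hσ hz), Finset.sum_eq_single (Fin.last n)]
  · simp only [mDz_lG hΩ hσ hz, Fin.val_last]
  · intro j _ hj
    have hj' : (j : ℕ) + 1 < n + 1 := by
      have := Fin.val_lt_last hj
      omega
    have hne : j ≠ ⟨j + 1, hj'⟩ := fun h => by simpa using congrArg Fin.val h
    rw [cramer_apply]
    refine det_zero_of_column_eq hne fun l => ?_
    rw [updateCol_self, updateCol_ne hne.symm, mDz_lG hΩ hσ hz]
    rfl
  · simp

theorem Dz_log_det_lG (hΩ : IsOpen Ω) (hσ : DifferentiableOn ℂ σ Ω) (hz : z ∈ Ω) {n : ℕ}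
    (hdet : (lG σ (n + 1) z).det ∈ Complex.slitPlane) :
    Dz (fun w => Complex.log (lG σ (n + 1) w).det) z = jetCoeff σ (n + 1) z (Fin.last n) := by
  rw [Dz_log (differentiableAt_det (differentiableAt_lG hΩ hσ hz)) hdet, Dz_det_lG hΩ hσ hz,
    jetCoeff, inv_mulVec_eq_cramer_div]

/-- The pairing of `σ^{(n)}` with its component orthogonal to `σ, …, σ^{(n-1)}`. -/
def jetResidual (σ : ℂ → H) (n : ℕ) (z : ℂ) : ℂ :=
  ⟪iteratedDeriv n σ z, iteratedDeriv n σ z⟫ -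
    ∑ j : Fin n, ⟪iteratedDeriv n σ z, iteratedDeriv j σ z⟫ * jetCoeff σ n z j

theorem det_lG_succ {n : ℕ} (hdet : (lG σ n z).det ≠ 0) :
    (lG σ (n + 1) z).det = jetResidual σ n z * (lG σ n z).det := by
  have h : lG σ (n + 1) z *ᵥ Fin.snoc (α := fun _ => ℂ) (-jetCoeff σ n z) 1 =
      Pi.single (Fin.last n) (jetResidual σ n z) := by
    funext i
    have hrow : (lG σ (n + 1) z *ᵥ Fin.snoc (α := fun _ => ℂ) (-jetCoeff σ n z) 1) i =
        ⟪iteratedDeriv i σ z, iteratedDeriv n σ z⟫ -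
          ∑ j : Fin n, ⟪iteratedDeriv i σ z, iteratedDeriv j σ z⟫ * jetCoeff σ n z j := by
      rw [mulVec, dotProduct, Fin.sum_univ_castSucc]
      simp [lG]
      ring
    rw [hrow]
    refine Fin.lastCases ?_ (fun l => ?_) i
    · simp [jetResidual]
    · have hl := congrFun (lG_mulVec_jetCoeff hdet) l
      rw [Pi.single_eq_of_ne (Fin.castSucc_lt_last l).ne, sub_eq_zero]
      exact hl.symm
  simpa [lG_submatrix_castSucc] using last_mul_det_of_mulVec_eq_single h

theorem lG_mulVec_Dzbar_jetCoeff (hΩ : IsOpen Ω) (hσ : DifferentiableOn ℂ σ Ω)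
    {n : ℕ} (hdet : ∀ w ∈ Ω, (lG σ (n + 1) w).det ≠ 0) (hz : z ∈ Ω) :
    (lG σ (n + 1) z *ᵥ fun j => Dzbar (fun w => jetCoeff σ (n + 1) w j) z) =
      Pi.single (Fin.last n) (jetResidual σ (n + 1) z) := by
  have hd := hasDerivAt_iteratedDeriv_of_differentiableOn hΩ hσ hz
  funext i
  have hdiff : Dzbar (fun w => ∑ j, lG σ (n + 1) w i j * jetCoeff σ (n + 1) w j) z =
      ⟪iteratedDeriv (i + 1) σ z, iteratedDeriv (n + 1) σ z⟫ := by
    rw [← Dzbar_inner (hd i) (hd (n + 1))]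
    refine Filter.EventuallyEq.Dzbar_eq ?_
    filter_upwards [hΩ.mem_nhds hz] with w hw
    exact congrFun (lG_mulVec_jetCoeff (hdet w hw)) i
  rw [Dzbar_sum_mul (differentiableAt_lG hΩ hσ hz i)
    (differentiableAt_jetCoeff hΩ hσ hz (hdet z hz)), Finset.sum_add_distrib] at hdiff
  have hbar : ∀ j : Fin (n + 1), Dzbar (fun w => lG σ (n + 1) w i j) z =
      ⟪iteratedDeriv (i + 1) σ z, iteratedDeriv j σ z⟫ := fun j => Dzbar_inner (hd i) (hd j)
  simp only [hbar] at hdiff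
  refine (eq_sub_of_add_eq' hdiff).trans ?_
  rcases eq_or_ne i (Fin.last n) with rfl | hi
  · rw [Pi.single_eq_same]
    rfl
  · have hi' : (i : ℕ) + 1 < n + 1 := by
      have := Fin.val_lt_last hi
      omega
    rw [Pi.single_eq_of_ne hi, sub_eq_zero]
    exact (congrFun (lG_mulVec_jetCoeff (hdet z hz)) ⟨i + 1, hi'⟩).symm

theorem Dzbar_jetCoeff_last (hΩ : IsOpen Ω) (hσ : DifferentiableOn ℂ σ Ω)
    {n : ℕ} (hdet : ∀ w ∈ Ω, (lG σ (n + 1) w).det ≠ 0) (hz : z ∈ Ω) :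
    Dzbar (fun w => jetCoeff σ (n + 1) w (Fin.last n)) z =
      (lG σ n z).det * (lG σ (n + 2) z).det / ((lG σ (n + 1) z).det) ^ 2 := by
  have h := last_mul_det_of_mulVec_eq_single (lG_mulVec_Dzbar_jetCoeff hΩ hσ hdet hz)
  rw [lG_submatrix_castSucc] at h
  have hne := hdet z hz
  rw [det_lG_succ hne, eq_div_iff (pow_ne_zero 2 hne)]
  linear_combination (lG σ (n + 1) z).det * h

end JetGram

/-- Curvature of the `k`-jet bundle of a `k`-nondegenerate line bundle: with
`K := ∂/∂z̄(G_k⁻¹·∂G_k/∂z)`, all columns of `K` except the last vanish, and the bottom-right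
entry equals `∂²(log det G_k)/∂z∂z̄ = det G_{k−1}·det G_{k+1}/(det G_k)²`. -/
theorem stmt16 (Ω : Set ℂ) (hΩ : IsOpen Ω) (k : ℕ) (hk : 1 ≤ k)
    (σ : ℂ → H) (hσ : DifferentiableOn ℂ σ Ω)
    (hnd : ∀ z ∈ Ω, LinearIndependent ℂ fun i : Fin (k + 1) => iteratedDeriv (i : ℕ) σ z) :
    ∀ z ∈ Ω,
      (∀ i j : Fin (k + 1), (j : ℕ) ≤ k - 1 →
        mDzbar (fun w => (lG σ (k + 1) w)⁻¹ * mDz (lG σ (k + 1)) w) z i j = 0) ∧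
      mDzbar (fun w => (lG σ (k + 1) w)⁻¹ * mDz (lG σ (k + 1)) w) z
          (Fin.last k) (Fin.last k) =
        Dzbar (fun w => Dz (fun u => Complex.log (lG σ (k + 1) u).det) w) z ∧
      mDzbar (fun w => (lG σ (k + 1) w)⁻¹ * mDz (lG σ (k + 1)) w) z
          (Fin.last k) (Fin.last k) =
        (lG σ k z).det * (lG σ (k + 2) z).det / ((lG σ (k + 1) z).det) ^ 2 := by
  intro z hz
  have hslit : ∀ w ∈ Ω, (lG σ (k + 1) w).det ∈ Complex.slitPlane := fun w hw =>
    det_lG_mem_slitPlane (hnd w hw)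
  have hdet : ∀ w ∈ Ω, (lG σ (k + 1) w).det ≠ 0 := fun w hw =>
    Complex.slitPlane_ne_zero (hslit w hw)
  have hnhds := hΩ.mem_nhds hz
  have hlast : mDzbar (fun w => (lG σ (k + 1) w)⁻¹ * mDz (lG σ (k + 1)) w) z
      (Fin.last k) (Fin.last k) = Dzbar (fun w => jetCoeff σ (k + 1) w (Fin.last k)) z := by
    refine Filter.EventuallyEq.Dzbar_eq ?_
    filter_upwards [hnhds] with w hw
    exact inv_mul_mDz_lG_last hΩ hσ hw _
  refine ⟨fun i j hj => ?_, hlast.trans ?_, hlast.trans (Dzbar_jetCoeff_last hΩ hσ hdet hz)⟩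
  · have hj' : (j : ℕ) + 1 < k + 1 := by omega
    refine Eq.trans (Filter.EventuallyEq.Dzbar_eq ?_)
      (Dzbar_const ((1 : Matrix (Fin (k + 1)) (Fin (k + 1)) ℂ) i ⟨j + 1, hj'⟩))
    filter_upwards [hnhds] with w hw
    exact inv_mul_mDz_lG_of_lt hΩ hσ hw (hdet w hw) i j hj'
  · refine Filter.EventuallyEq.Dzbar_eq ?_
    filter_upwards [hnhds] with w hw
    exact (Dz_log_det_lG hΩ hσ hw (hslit w hw)).symm
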